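/- arXiv:2408.06392 — 2 statements merged into one kernel-verified Lean document; each statement's English description precedes it below -/
import Mathlib

section
/- Let f be an almost embedding of K₅ − 45 (the complete graph on {1,…,5} with the edge {4,5} removed) in the plane. Then wu_tri(p₄₁, p₄₂, p₄₃) − wu_tri(p₅₁, p₅₂, p₅₃) = 2·(w_f(123, 4) − w_f(123, 5)), where for v ∈ {4,5} the triodic Wu number is wu_tri(p_{v1}, p_{v2}, p_{v3}) := 2·(w'(p̄_{v2}p_{v3}, f₁) + w'(p̄_{v1}p_{v2}, f₃) + w'(p̄_{v3}p_{v1}, f₂)) (p̄ denoting the reverse of p and juxtaposition denoting concatenation), and w_f(123, v) := w'(p₁₂, f_v) + w'(p₂₃, f_v) + w'(p₃₁, f_v). -/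
/-- Sum of the oriented angles ∠A₁OA₂ + ∠A₂OA₃ + ⋯ + ∠A_{m−1}OA_m at `O`
along a polygonal line given as a list of points in the plane `ℂ`,
where ∠AOB := Complex.arg ((B − O)/(A − O)) ∈ (−π, π]. -/
noncomputable def angSum (O : ℂ) : List ℂ → ℝ
  | a :: b :: rest => Complex.arg ((b - O) / (a - O)) + angSum O (b :: rest)
  | _ => 0

/-- `w'(A₁…A_m, O)`: the (non-closed) winding number of a polygonal line around `O`,
i.e. `(∠A₁OA₂ + ⋯ + ∠A_{m−1}OA_m) / (2π)`. -/
noncomputable def wp (O : ℂ) (l : List ℂ) : ℝ := angSum O l / (2 * Real.pi)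

/-- `w(A₁…A_m, O)`: the winding number of the closed polygonal line `A₁…A_m` around `O`,
i.e. `(∠A₁OA₂ + ⋯ + ∠A_{m−1}OA_m + ∠A_mOA₁) / (2π)`. -/
noncomputable def wcl (O : ℂ) (l : List ℂ) : ℝ := wp O (l ++ [l.headI])

/-- The image of a polygonal line: the union of the segments between consecutive points. -/
def imagePL : List ℂ → Set ℂ
  | [] => ∅
  | [a] => {a}
  | a :: b :: rest => segment ℝ a b ∪ imagePL (b :: rest)

/-- Edges of `K₅ − 45`: all pairs of distinct vertices except `{4,5}`
(vertices `1,…,5` are encoded as `0,…,4 : Fin 5`, so the removed edge is `{3,4}`). -/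
def IsEdgeK5m45 (i j : Fin 5) : Prop := i ≠ j ∧ ¬(i = 3 ∧ j = 4) ∧ ¬(i = 4 ∧ j = 3)

lemma aux_arg_div {u v : ℂ} (hu : 0 < u.re) (hv : 0 < v.re) :
    Complex.arg (u / v) = Complex.arg u - Complex.arg v := by
  have hu0 : u ≠ 0 := by rintro rfl; simp at hu
  have hv0 : v ≠ 0 := by rintro rfl; simp at hv
  have h1 := abs_lt.mp (Complex.abs_arg_lt_pi_div_two_iff.mpr (Or.inl hu))
  have h2 := abs_lt.mp (Complex.abs_arg_lt_pi_div_two_iff.mpr (Or.inl hv))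
  have hvp : v.arg ≠ Real.pi := by linarith [h2.2, Real.pi_pos]
  rw [div_eq_mul_inv, (Complex.arg_mul_eq_add_arg_iff hu0 (inv_ne_zero hv0)).mpr,
    Complex.arg_inv, if_neg hvp]
  · ring
  · rw [Complex.arg_inv, if_neg hvp]
    constructor <;> linarith [h1.1, h1.2, h2.1, h2.2]

lemma aux_arg_div_mul {u v w : ℂ} (hu : 0 < (w * u).re) (hv : 0 < (w * v).re) :
    Complex.arg (u / v) = Complex.arg (w * u) - Complex.arg (w * v) := by
  have hw : w ≠ 0 := by rintro rfl; simp at hu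
  rw [← aux_arg_div hu hv, mul_div_mul_left _ _ hw]

lemma aux_sep {A B C D : ℂ} (h : Disjoint (segment ℝ A B) (segment ℝ C D)) :
    ∃ w : ℂ, ∀ x ∈ segment ℝ A B, ∀ y ∈ segment ℝ C D, 0 < (w * (y - x)).re := by
  have hc : ∀ x y : ℂ, IsCompact (segment ℝ x y) := by
    intro x y
    rw [segment_eq_image_lineMap]
    exact isCompact_Icc.image AffineMap.lineMap_continuous
  obtain ⟨g, u, v, h1, h2, h3⟩ := geometric_hahn_banach_compact_closed (convex_segment A B)
    (hc A B) (convex_segment C D) (hc C D).isClosed h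
  have hg : ∀ z : ℂ, ((⟨g 1, - g Complex.I⟩ : ℂ) * z).re = g z := by
    intro z
    have hz : z = z.re • (1 : ℂ) + z.im • Complex.I := by
      apply Complex.ext <;> simp
    conv_rhs => rw [hz]
    rw [map_add, map_smul, map_smul]
    simp only [Complex.mul_re, smul_eq_mul]
    ring
  refine ⟨⟨g 1, - g Complex.I⟩, fun x hx y hy => ?_⟩
  rw [hg, map_sub]
  linarith [h1 x hx, h3 y hy]

lemma aux_seg {A B C D : ℂ} (h : Disjoint (segment ℝ A B) (segment ℝ C D)) :
    Complex.arg ((D - A) / (C - A)) + Complex.arg ((B - D) / (A - D)) =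
      Complex.arg ((B - C) / (A - C)) + Complex.arg ((D - B) / (C - B)) := by
  obtain ⟨w, hw⟩ := aux_sep h
  have a := left_mem_segment ℝ A B
  have b := right_mem_segment ℝ A B
  have c := left_mem_segment ℝ C D
  have d := right_mem_segment ℝ C D
  have e1 : (B - D) / (A - D) = (D - B) / (D - A) := by
    rw [← neg_sub D B, ← neg_sub D A, neg_div_neg_eq]
  have e2 : (B - C) / (A - C) = (C - B) / (C - A) := by
    rw [← neg_sub C B, ← neg_sub C A, neg_div_neg_eq]
  rw [e1, e2, aux_arg_div_mul (hw _ a _ d) (hw _ a _ c), aux_arg_div_mul (hw _ b _ d) (hw _ a _ d),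
    aux_arg_div_mul (hw _ b _ c) (hw _ a _ c), aux_arg_div_mul (hw _ b _ d) (hw _ b _ c)]
  ring

lemma aux_key1 (C D : ℂ) : ∀ (l : List ℂ) (a : ℂ),
    Disjoint (imagePL (a :: l)) (segment ℝ C D) →
    Complex.arg ((D - a) / (C - a)) + angSum D (a :: l) = angSum C (a :: l) +
      Complex.arg ((D - (a :: l).getLast (by simp)) / (C - (a :: l).getLast (by simp)))
  | [], a, _ => by simp [angSum]
  | b :: l, a, h => by
    rw [imagePL, Set.disjoint_union_left] at h
    have h1 := aux_seg h.1
    have h2 := aux_key1 C D l b h.2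
    simp only [angSum, List.getLast_cons_cons]
    linarith

lemma aux_key2 (l : List ℂ) (a : ℂ) : ∀ (m : List ℂ) (c : ℂ),
    Disjoint (imagePL (a :: l)) (imagePL (c :: m)) →
    angSum a (c :: m) + angSum ((c :: m).getLast (by simp)) (a :: l) = angSum c (a :: l) +
      angSum ((a :: l).getLast (by simp)) (c :: m)
  | [], c, _ => by simp [angSum]
  | d :: m, c, h => by
    rw [imagePL, Set.disjoint_union_right] at h
    have h1 := aux_key1 c d l a h.1
    have h2 := aux_key2 l a m d h.2
    rw [angSum.eq_1 a, angSum.eq_1 ((a :: l).getLast (by simp))]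
    simp only [List.getLast_cons_cons]
    linarith

lemma aux_key {l m : List ℂ} {A B C D : ℂ} (hl : l ≠ []) (hm : m ≠ [])
    (hA : l.headI = A) (hB : l.getLast hl = B) (hC : m.headI = C) (hD : m.getLast hm = D)
    (h : Disjoint (imagePL l) (imagePL m)) :
    wp A m + wp D l = wp C l + wp B m := by
  cases l with
  | nil => exact absurd rfl hl
  | cons a l =>
  cases m with
  | nil => exact absurd rfl hm
  | cons c m =>
  have := aux_key2 l a m c h
  simp only [List.headI] at hA hC
  subst hA hB hC hD
  simp only [wp]
  rw [← add_div, ← add_div, this]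

lemma aux_append (O a : ℂ) (m : List ℂ) : ∀ l : List ℂ,
    angSum O (l ++ a :: m) = angSum O (l ++ [a]) + angSum O (a :: m)
  | [] => by simp [angSum]
  | [b] => by simp [angSum]
  | b :: c :: l => by
    have := aux_append O a m (c :: l)
    simp only [List.cons_append, angSum] at this ⊢
    linarith

lemma aux_concat {O A : ℂ} {l m : List ℂ} (hl : l ≠ []) (hm : m ≠ [])
    (h1 : l.getLast hl = A) (h2 : m.headI = A) :
    wp O (l ++ m) = wp O l + wp O m := by
  cases m with
  | nil => exact absurd rfl hm
  | cons c m =>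
  simp only [List.headI] at h2
  subst h2
  simp only [wp]
  rw [← add_div]
  congr 1
  rw [← List.dropLast_append_getLast hl, h1, List.append_assoc, List.singleton_append,
    aux_append O c (c :: m)]
  congr 1
  rw [angSum]
  have : Complex.arg ((c - O) / (c - O)) = 0 := by
    by_cases h : c - O = 0
    · simp [h]
    · simp [div_self h]
  rw [this, zero_add]

lemma aux_arg_swap {O a b : ℂ} (h : O ∉ segment ℝ a b) :
    Complex.arg ((a - O) / (b - O)) = - Complex.arg ((b - O) / (a - O)) := by
  have hd : Disjoint (segment ℝ O O) (segment ℝ a b) := by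
    rw [segment_same, Set.disjoint_singleton_left]; exact h
  obtain ⟨w, hw⟩ := aux_sep hd
  have a' := hw _ (left_mem_segment ℝ O O) _ (left_mem_segment ℝ a b)
  have b' := hw _ (left_mem_segment ℝ O O) _ (right_mem_segment ℝ a b)
  rw [aux_arg_div_mul a' b', aux_arg_div_mul b' a']
  ring

lemma aux_reverse (O : ℂ) : ∀ l : List ℂ, O ∉ imagePL l → angSum O l.reverse = - angSum O l
  | [], _ => by simp [angSum]
  | [a], _ => by simp [angSum]
  | a :: b :: l, h => by
    rw [imagePL, Set.mem_union, not_or] at h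
    have ih := aux_reverse O (b :: l) h.2
    have hs := aux_arg_swap h.1
    have : (a :: b :: l).reverse = l.reverse ++ b :: [a] := by simp
    rw [this, aux_append, ← List.reverse_cons, ih]
    simp only [angSum]
    linarith

lemma aux_wp_reverse {O : ℂ} {l : List ℂ} (h : O ∉ imagePL l) : wp O l.reverse = - wp O l := by
  simp only [wp, aux_reverse O l h, neg_div]

/-- Let `f` be an almost embedding of `K₅ − 45` in the plane. Then
`wu_tri(p₄₁, p₄₂, p₄₃) − wu_tri(p₅₁, p₅₂, p₅₃) = 2·(w_f(123, 4) − w_f(123, 5))`, where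
for `v ∈ {4,5}` the triodic Wu number is
`wu_tri(p_{v1}, p_{v2}, p_{v3}) := 2·(w'(p̄_{v2}p_{v3}, f₁) + w'(p̄_{v1}p_{v2}, f₃) + w'(p̄_{v3}p_{v1}, f₂))`
(`p̄` the reverse of `p`, juxtaposition the concatenation), and
`w_f(123, v) := w'(p₁₂, f_v) + w'(p₂₃, f_v) + w'(p₃₁, f_v)`
(vertices `1,…,5` are encoded as `0,…,4 : Fin 5`). -/
theorem triodic_wu_difference_K5_minus_edge (f : Fin 5 → ℂ)
    (p : Fin 5 → Fin 5 → List ℂ)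
    (hinj : Function.Injective f)
    (hne : ∀ i j, IsEdgeK5m45 i j → p i j ≠ [])
    (hjoin : ∀ i j, ∀ h : IsEdgeK5m45 i j,
      (p i j).headI = f i ∧ (p i j).getLast (hne i j h) = f j)
    (hsym : ∀ i j, p j i = (p i j).reverse)
    (hdisj : ∀ i j k l : Fin 5, IsEdgeK5m45 i j → IsEdgeK5m45 k l →
      i ≠ k → i ≠ l → j ≠ k → j ≠ l →
      Disjoint (imagePL (p i j)) (imagePL (p k l)))
    (hvert : ∀ i j l : Fin 5, IsEdgeK5m45 i j → l ≠ i → l ≠ j →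
      f l ∉ imagePL (p i j)) :
    2 * (wp (f 0) ((p 3 1).reverse ++ p 3 2) + wp (f 2) ((p 3 0).reverse ++ p 3 1) +
        wp (f 1) ((p 3 2).reverse ++ p 3 0)) -
      2 * (wp (f 0) ((p 4 1).reverse ++ p 4 2) + wp (f 2) ((p 4 0).reverse ++ p 4 1) +
        wp (f 1) ((p 4 2).reverse ++ p 4 0)) =
      2 * ((wp (f 3) (p 0 1) + wp (f 3) (p 1 2) + wp (f 3) (p 2 0)) -
        (wp (f 4) (p 0 1) + wp (f 4) (p 1 2) + wp (f 4) (p 2 0))) := by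
  have e : ∀ i j : Fin 5, (i ≠ j ∧ ¬(i = 3 ∧ j = 4) ∧ ¬(i = 4 ∧ j = 3)) → IsEdgeK5m45 i j :=
    fun i j h => h
  have K : ∀ v i j k : Fin 5, IsEdgeK5m45 v i → IsEdgeK5m45 j k → v ≠ j → v ≠ k → i ≠ j → i ≠ k →
      wp (f v) (p j k) + wp (f k) (p v i) = wp (f j) (p v i) + wp (f i) (p j k) := by
    intro v i j k h1 h2 a b c d
    exact aux_key (hne _ _ h1) (hne _ _ h2) (hjoin _ _ h1).1 (hjoin _ _ h1).2
      (hjoin _ _ h2).1 (hjoin _ _ h2).2 (hdisj _ _ _ _ h1 h2 a b c d)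
  have T : ∀ v i j k : Fin 5, IsEdgeK5m45 v j → IsEdgeK5m45 j v → IsEdgeK5m45 v k → i ≠ v → i ≠ j →
      wp (f i) ((p v j).reverse ++ p v k) = - wp (f i) (p v j) + wp (f i) (p v k) := by
    intro v i j k h1 h2 h3 a b
    rw [← aux_wp_reverse (hvert _ _ _ h1 a b), ← hsym]
    exact aux_concat (hne _ _ h2) (hne _ _ h3) (hjoin _ _ h2).2 (hjoin _ _ h3).1
  have S : ∀ v : Fin 5, v = 3 ∨ v = 4 →
      (wp (f 0) ((p v 1).reverse ++ p v 2) + wp (f 2) ((p v 0).reverse ++ p v 1) +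
        wp (f 1) ((p v 2).reverse ++ p v 0)) =
      (wp (f v) (p 0 1) + wp (f v) (p 1 2) + wp (f v) (p 2 0)) -
      (wp (f 0) (p 1 2) + wp (f 1) (p 2 0) + wp (f 2) (p 0 1)) := by
    intro v hv
    have ev : ∀ i : Fin 5, i = 0 ∨ i = 1 ∨ i = 2 →
        IsEdgeK5m45 v i ∧ IsEdgeK5m45 i v ∧ v ≠ i ∧ i ≠ v := by
      unfold IsEdgeK5m45
      revert v
      decide
    obtain ⟨a0, b0, c0, d0⟩ := ev 0 (by simp)
    obtain ⟨a1, b1, c1, d1⟩ := ev 1 (by simp)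
    obtain ⟨a2, b2, c2, d2⟩ := ev 2 (by simp)
    have k0 := K v 0 1 2 a0 (e _ _ (by decide)) c1 c2 (by decide) (by decide)
    have k1 := K v 1 2 0 a1 (e _ _ (by decide)) c2 c0 (by decide) (by decide)
    have k2 := K v 2 0 1 a2 (e _ _ (by decide)) c0 c1 (by decide) (by decide)
    rw [T v 0 1 2 a1 b1 a2 d0 (by decide), T v 2 0 1 a0 b0 a1 d2 (by decide),
      T v 1 2 0 a2 b2 a0 d1 (by decide)]
    linarith
  rw [S 3 (by simp), S 4 (by simp)]
  ring
end

section
/- (Linear Conway–Gordon–Sachs theorem.) Let f : {1,…,6} → ℝ³ be six points in 3-space such that no four of them lie in one plane (every four of the points are affinely independent). Then there exists a partition of {1,…,6} into two 3-element sets {i,j,k} and {p,q,r} such that the triangle convexHull{f(i), f(j), f(k)} intersects the union of segments [f(p)f(q)] ∪ [f(q)f(r)] ∪ [f(r)f(p)] in exactly one point. -/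
def cgsC (s : Fin 6 → Bool) (r a : Fin 6) : Bool := xor (s a) (decide (a < r))

def cgsG (s : Fin 6 → Bool) (u v w p q r : Fin 6) : Bool :=
  (cgsC s r u == cgsC s r v) && (cgsC s r u == cgsC s r w) &&
  (cgsC s r u != cgsC s r p) && (cgsC s r u != cgsC s r q)

def cgsT : Fin 7 → Fin 6 → Fin 6 :=
  ![![0,1,3,2,4,5], ![0,1,4,2,3,5], ![0,2,3,1,4,5], ![0,2,4,1,3,5],
    ![0,2,5,1,3,4], ![0,3,4,1,2,5], ![0,3,5,1,2,4]]

lemma cgsT_inj : ∀ n, Function.Injective (cgsT n) := by decide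

def cgsOne (a b c : Bool) : Bool :=
  (a && !b && !c) || (!a && b && !c) || (!a && !b && c)

lemma cgs_comb_aux : ∀ s0 s1 s2 s3 s4 s5 : Bool,
    let s := ![s0, s1, s2, s3, s4, s5]
    (∀ r, ∃ a b, a ≠ r ∧ b ≠ r ∧ cgsC s r a ≠ cgsC s r b) →
    ∃ n, let e := cgsT n
      cgsOne (cgsG s (e 0) (e 1) (e 2) (e 3) (e 4) (e 5))
        (cgsG s (e 0) (e 1) (e 2) (e 4) (e 5) (e 3))
        (cgsG s (e 0) (e 1) (e 2) (e 5) (e 3) (e 4)) = true := by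
  decide +kernel

lemma cgs_comb (s : Fin 6 → Bool)
    (h : ∀ r, ∃ a b, a ≠ r ∧ b ≠ r ∧ cgsC s r a ≠ cgsC s r b) :
    ∃ e : Fin 6 ≃ Fin 6,
      cgsOne (cgsG s (e 0) (e 1) (e 2) (e 3) (e 4) (e 5))
        (cgsG s (e 0) (e 1) (e 2) (e 4) (e 5) (e 3))
        (cgsG s (e 0) (e 1) (e 2) (e 5) (e 3) (e 4)) = true := by
  have hs : s = ![s 0, s 1, s 2, s 3, s 4, s 5] := by
    ext i; fin_cases i <;> rfl
  have := cgs_comb_aux (s 0) (s 1) (s 2) (s 3) (s 4) (s 5)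
  simp only [← hs] at this
  obtain ⟨n, hn⟩ := this h
  exact ⟨Equiv.ofBijective (cgsT n) (Finite.injective_iff_bijective.mp (cgsT_inj n)), hn⟩

section
variable {E : Type*} [AddCommGroup E] [Module ℝ E]

def cgsKer (g : Fin 6 → E) (w : Fin 6 → ℝ) : Prop := ∑ i, w i = 0 ∧ ∑ i, w i • g i = 0

def cgsGP (g : Fin 6 → E) : Prop :=
  ∀ w, cgsKer g w → ∀ a b, a ≠ b → w a = 0 → w b = 0 → w = 0

lemma cgsKer_comp {g : Fin 6 → E} {w} (h : cgsKer g w) (e : Fin 6 ≃ Fin 6) :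
    cgsKer (g ∘ e) (w ∘ e) :=
  ⟨by simpa using (Equiv.sum_comp e w).trans h.1,
   by simpa using (Equiv.sum_comp e (fun i => w i • g i)).trans h.2⟩

lemma cgsGP_comp {g : Fin 6 → E} (h : cgsGP g) (e : Fin 6 ≃ Fin 6) : cgsGP (g ∘ e) := by
  intro w hw a b hab ha hb
  have h1 := cgsKer_comp hw e.symm
  have h2 : (g ∘ e) ∘ e.symm = g := by ext; simp
  rw [h2] at h1
  have := h _ h1 (e a) (e b) (by simpa) (by simpa) (by simpa)
  ext i
  simpa using congrFun this (e i)

lemma cgs_hull (a b c z : E) : z ∈ convexHull ℝ {a, b, c} ↔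
    ∃ α β γ : ℝ, 0 ≤ α ∧ 0 ≤ β ∧ 0 ≤ γ ∧ α + β + γ = 1 ∧ α • a + β • b + γ • c = z := by
  constructor
  · intro h
    rw [convexHull_insert (by simp)] at h
    simp only [mem_convexJoin, convexHull_pair, Set.mem_singleton_iff, exists_eq_left] at h
    obtain ⟨y, ⟨p, q, hp, hq, hpq, rfl⟩, ⟨u, v, hu, hv, huv, rfl⟩⟩ := h
    refine ⟨u, v * p, v * q, hu, by positivity, by positivity, ?_, ?_⟩
    · rw [add_assoc, ← mul_add, hpq]; linarith
    · module
  · rintro ⟨α, β, γ, h1, h2, h3, h4, rfl⟩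
    have hc := convex_convexHull ℝ ({a, b, c} : Set E)
    have := hc.sum_mem (t := Finset.univ) (w := ![α, β, γ]) (z := ![a, b, c])
      (by intro i _; fin_cases i <;> simpa) (by simp [Fin.sum_univ_three, h4])
      (by intro i _; fin_cases i <;> exact subset_convexHull _ _ (by simp))
    simpa [Fin.sum_univ_three] using this

lemma cgs_seg {g : Fin 6 → E} (K : cgsGP g) {w} (hw : cgsKer g w) (h5 : w 5 = 0)
    (hne : w 4 ≠ 0) (z : E) :
    z ∈ convexHull ℝ {g 0, g 1, g 2} ∩ segment ℝ (g 3) (g 4) ↔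
    ∃ c : ℝ, 0 ≤ c * w 0 ∧ 0 ≤ c * w 1 ∧ 0 ≤ c * w 2 ∧ c * w 3 ≤ 0 ∧ c * w 4 ≤ 0 ∧
      c * (w 0 + w 1 + w 2) = 1 ∧ z = c • (w 0 • g 0 + w 1 • g 1 + w 2 • g 2) := by
  constructor
  · rintro ⟨hz1, ⟨p, q, hp, hq, hpq, hz2⟩⟩
    obtain ⟨α, β, γ, h1, h2, h3, h4, rfl⟩ := (cgs_hull _ _ _ _).1 hz1
    set c := -q / w 4 with hc
    have hk : cgsKer g (fun i => ![α, β, γ, -p, -q, 0] i - c * w i) := by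
      constructor
      · rw [Finset.sum_sub_distrib, ← Finset.mul_sum, hw.1]
        simp [Fin.sum_univ_six]; linarith
      · simp only [sub_smul, mul_smul]
        rw [Finset.sum_sub_distrib, ← Finset.smul_sum, hw.2]
        simp [Fin.sum_univ_six, ← hz2]
    have h0 := K _ hk 4 5 (by decide) (by simp [hc, hne]) (by simp [h5])
    have e0 := congrFun h0 0
    have e1 := congrFun h0 1
    have e2 := congrFun h0 2
    have e3 := congrFun h0 3
    have e4 := congrFun h0 4
    simp [-neg_sub] at e0 e1 e2 e3 e4
    refine ⟨c, by linarith, by linarith, by linarith, by linarith, by linarith, by linarith, ?_⟩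
    have e0 : α = c * w 0 := by linarith
    have e1 : β = c * w 1 := by linarith
    have e2 : γ = c * w 2 := by linarith
    rw [e0, e1, e2]; module
  · rintro ⟨c, h0, h1, h2, h3, h4, h6, rfl⟩
    obtain ⟨k1, k2⟩ := hw
    simp [Fin.sum_univ_six, h5] at k1 k2
    refine ⟨(cgs_hull _ _ _ _).2 ⟨_, _, _, h0, h1, h2, by linarith, by module⟩,
      ⟨-(c * w 3), -(c * w 4), by linarith, by linarith, by linear_combination h6 - c * k1, ?_⟩⟩
    rw [← sub_eq_zero]
    have k3 := congrArg (fun z => (-c) • z) k2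
    simp only [smul_zero] at k3
    rw [← k3]; module

def cgsGood (w : Fin 6 → ℝ) : Prop :=
  (0 < w 0 ↔ 0 < w 1) ∧ (0 < w 0 ↔ 0 < w 2) ∧ ¬ (0 < w 0 ↔ 0 < w 3) ∧ ¬ (0 < w 0 ↔ 0 < w 4)

lemma cgs_good {g : Fin 6 → E} (K : cgsGP g) {w} (hw : cgsKer g w) (h5 : w 5 = 0)
    (hne : ∀ a, a ≠ 5 → w a ≠ 0) (hg : cgsGood w) :
    ∃ x, convexHull ℝ {g 0, g 1, g 2} ∩ segment ℝ (g 3) (g 4) = {x} := by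
  have n0 := hne 0 (by decide)
  have n1 := hne 1 (by decide)
  have n2 := hne 2 (by decide)
  have n3 := hne 3 (by decide)
  have n4 := hne 4 (by decide)
  refine ⟨(w 0 + w 1 + w 2)⁻¹ • (w 0 • g 0 + w 1 • g 1 + w 2 • g 2), ?_⟩
  ext z
  rw [cgs_seg K hw h5 n4, Set.mem_singleton_iff]
  constructor
  · rintro ⟨c, -, -, -, -, -, h, rfl⟩
    rw [eq_inv_of_mul_eq_one_left h]
  · rintro rfl
    obtain ⟨g1, g2, g3, g4⟩ := hg
    rcases lt_or_gt_of_ne n0 with h | h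
    · have a1 : w 1 < 0 := by grind
      have a2 : w 2 < 0 := by grind
      have a3 : 0 < w 3 := by grind
      have a4 : 0 < w 4 := by grind
      have hs : w 0 + w 1 + w 2 < 0 := by linarith
      have hs' := inv_neg''.2 hs
      exact ⟨_, by nlinarith, by nlinarith, by nlinarith, by nlinarith, by nlinarith,
        inv_mul_cancel₀ hs.ne, rfl⟩
    · have a1 : 0 < w 1 := by grind
      have a2 : 0 < w 2 := by grind
      have a3 : w 3 < 0 := by grind
      have a4 : w 4 < 0 := by grind
      have hs : 0 < w 0 + w 1 + w 2 := by linarith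
      have hs' := inv_pos.2 hs
      exact ⟨_, by nlinarith, by nlinarith, by nlinarith, by nlinarith, by nlinarith,
        inv_mul_cancel₀ hs.ne', rfl⟩

lemma cgs_bad {g : Fin 6 → E} (K : cgsGP g) {w} (hw : cgsKer g w) (h5 : w 5 = 0)
    (hne : ∀ a, a ≠ 5 → w a ≠ 0) (hg : ¬ cgsGood w) :
    convexHull ℝ {g 0, g 1, g 2} ∩ segment ℝ (g 3) (g 4) = ∅ := by
  have n0 := hne 0 (by decide)
  have n1 := hne 1 (by decide)
  have n2 := hne 2 (by decide)
  have n3 := hne 3 (by decide)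
  have n4 := hne 4 (by decide)
  rw [Set.eq_empty_iff_forall_notMem]
  intro z hz
  rw [cgs_seg K hw h5 n4] at hz
  obtain ⟨c, h0, h1, h2, h3, h4, h6, -⟩ := hz
  apply hg
  rcases lt_trichotomy c 0 with hc | rfl | hc
  · have a0 : w 0 < 0 := lt_of_le_of_ne (by nlinarith) n0
    have a1 : w 1 < 0 := lt_of_le_of_ne (by nlinarith) n1
    have a2 : w 2 < 0 := lt_of_le_of_ne (by nlinarith) n2
    have a3 : 0 < w 3 := lt_of_le_of_ne (by nlinarith) n3.symm
    have a4 : 0 < w 4 := lt_of_le_of_ne (by nlinarith) n4.symm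
    unfold cgsGood; grind
  · simp at h6
  · have a0 : 0 < w 0 := lt_of_le_of_ne (by nlinarith) n0.symm
    have a1 : 0 < w 1 := lt_of_le_of_ne (by nlinarith) n1.symm
    have a2 : 0 < w 2 := lt_of_le_of_ne (by nlinarith) n2.symm
    have a3 : w 3 < 0 := lt_of_le_of_ne (by nlinarith) n3
    have a4 : w 4 < 0 := lt_of_le_of_ne (by nlinarith) n4
    unfold cgsGood; grind

/-- Edge statement in sorted position. -/
lemma cgs_edge {g : Fin 6 → E} (K : cgsGP g) {y t : Fin 6 → ℝ} (hy : cgsKer g y)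
    (hyt : cgsKer g (fun i => y i * t i)) (hn : ∀ i, y i ≠ 0) (ht : StrictMono t)
    (e : Fin 6 ≃ Fin 6) :
    (cgsG (fun a => decide (0 < y a)) (e 0) (e 1) (e 2) (e 3) (e 4) (e 5) = true →
      ∃ x, convexHull ℝ {g (e 0), g (e 1), g (e 2)} ∩ segment ℝ (g (e 3)) (g (e 4)) = {x}) ∧
    (cgsG (fun a => decide (0 < y a)) (e 0) (e 1) (e 2) (e 3) (e 4) (e 5) = false →
      convexHull ℝ {g (e 0), g (e 1), g (e 2)} ∩ segment ℝ (g (e 3)) (g (e 4)) = ∅) := by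
  set w : Fin 6 → ℝ := fun a => y a * (t a - t (e 5)) with hwdef
  have hw : cgsKer g w := by
    have h2 : w = fun a => y a * t a - t (e 5) * y a := by ext; simp [hwdef]; ring
    rw [h2]
    constructor
    · rw [Finset.sum_sub_distrib, ← Finset.mul_sum, hy.1, hyt.1]; simp
    · simp only [sub_smul, mul_smul (t (e 5))]
      rw [Finset.sum_sub_distrib, ← Finset.smul_sum, hy.2, hyt.2]; simp
  have hs : ∀ a, a ≠ 5 → ((0 < w (e a)) ↔ cgsC (fun a => decide (0 < y a)) (e 5) (e a) = true) := by
    intro a ha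
    have hea : e a ≠ e 5 := by simpa
    simp only [hwdef, cgsC]
    rcases lt_or_gt_of_ne hea with h1 | h1 <;> have h2 := ht h1 <;>
      rcases lt_or_gt_of_ne (hn (e a)) with h3 | h3
    · have : 0 < y (e a) * (t (e a) - t (e 5)) := by nlinarith
      simp [this, h1, h3.le]
    · have : ¬ 0 < y (e a) * (t (e a) - t (e 5)) := by nlinarith
      simp [this, h1, h3]
    · have : ¬ 0 < y (e a) * (t (e a) - t (e 5)) := by nlinarith
      simp [this, h1.not_gt, h3.not_gt]
    · have : 0 < y (e a) * (t (e a) - t (e 5)) := by nlinarith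
      simp [this, h1.le, h3]
  have hne : ∀ a, a ≠ 5 → (w ∘ e) a ≠ 0 := by
    intro a ha
    have hea : e a ≠ e 5 := by simpa
    exact mul_ne_zero (hn _) (sub_ne_zero.2 (ht.injective.ne hea))
  have h5 : (w ∘ e) 5 = 0 := by simp [hwdef]
  have hgood : cgsGood (w ∘ e) ↔
      cgsG (fun a => decide (0 < y a)) (e 0) (e 1) (e 2) (e 3) (e 4) (e 5) = true := by
    unfold cgsGood cgsG
    simp only [Function.comp]
    rw [hs 0 (by decide), hs 1 (by decide), hs 2 (by decide), hs 3 (by decide), hs 4 (by decide)]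
    generalize cgsC _ _ (e 0) = a0
    generalize cgsC _ _ (e 1) = a1
    generalize cgsC _ _ (e 2) = a2
    generalize cgsC _ _ (e 3) = a3
    generalize cgsC _ _ (e 4) = a4
    revert a0 a1 a2 a3 a4; decide
  exact ⟨fun h => cgs_good (cgsGP_comp K e) (cgsKer_comp hw e) h5 hne (hgood.2 h),
    fun h => cgs_bad (cgsGP_comp K e) (cgsKer_comp hw e) h5 hne (by rw [hgood, h]; simp)⟩

lemma cgs_sorted {g : Fin 6 → E} (K : cgsGP g) {y t : Fin 6 → ℝ} (hy : cgsKer g y)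
    (hyt : cgsKer g (fun i => y i * t i)) (hn : ∀ i, y i ≠ 0) (ht : StrictMono t) :
    ∃ e : Fin 6 ≃ Fin 6, ∃ x : E,
      convexHull ℝ {g (e 0), g (e 1), g (e 2)} ∩
        (segment ℝ (g (e 3)) (g (e 4)) ∪ segment ℝ (g (e 4)) (g (e 5)) ∪
          segment ℝ (g (e 5)) (g (e 3))) = {x} := by
  obtain ⟨e, he⟩ := cgs_comb (fun a => decide (0 < y a)) (by
    intro r
    by_contra hcon
    push Not at hcon
    have hsum : ∑ a, y a * (t a - t r) = 0 := by
      simp only [mul_sub]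
      rw [Finset.sum_sub_distrib, ← Finset.sum_mul, hy.1, hyt.1]; simp
    obtain ⟨a0, ha0⟩ : ∃ a0 : Fin 6, a0 ≠ r := exists_ne r
    have key : ∀ a, a ≠ r → 0 < (y a0 * (t a0 - t r)) * (y a * (t a - t r)) := by
      intro a ha
      have := hcon a0 a ha0 ha
      have aux : ∀ a, a ≠ r →
          (cgsC (fun a => decide (0 < y a)) r a = true ∧ 0 < y a * (t a - t r)) ∨
          (cgsC (fun a => decide (0 < y a)) r a = false ∧ y a * (t a - t r) < 0) := by
        intro a hea
        simp only [cgsC]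
        rcases lt_or_gt_of_ne hea with h1 | h1 <;> have h2 := ht h1 <;>
          rcases lt_or_gt_of_ne (hn a) with h3 | h3
        · left; exact ⟨by simp [h1, h3.le], by nlinarith⟩
        · right; exact ⟨by simp [h1, h3], by nlinarith⟩
        · right; exact ⟨by simp [h1.not_gt, h3.not_gt], by nlinarith⟩
        · left; exact ⟨by simp [h1.le, h3], by nlinarith⟩
      rcases aux a0 ha0 with h1 | h1 <;> rcases aux a ha with h2 | h2
      · exact mul_pos h1.2 h2.2
      · simp [h1.1, h2.1] at this
      · simp [h1.1, h2.1] at this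
      · exact mul_pos_of_neg_of_neg h1.2 h2.2
    have : 0 < ∑ a, (y a0 * (t a0 - t r)) * (y a * (t a - t r)) := by
      apply Finset.sum_pos'
      · intro a _
        by_cases ha : a = r
        · simp [ha]
        · exact (key a ha).le
      · exact ⟨a0, by simp, key a0 ha0⟩
    rw [← Finset.mul_sum, hsum] at this
    simp at this)
  refine ⟨e, ?_⟩
  have E1 := cgs_edge K hy hyt hn ht e
  let c1 : Fin 6 ≃ Fin 6 := ⟨![0,1,2,4,5,3], ![0,1,2,5,3,4], by decide, by decide⟩
  let c2 : Fin 6 ≃ Fin 6 := ⟨![0,1,2,5,3,4], ![0,1,2,4,5,3], by decide, by decide⟩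
  have E2 := cgs_edge K hy hyt hn ht (c1.trans e)
  have E3 := cgs_edge K hy hyt hn ht (c2.trans e)
  simp only [Equiv.trans_apply, show c1 0 = 0 from rfl, show c1 1 = 1 from rfl,
    show c1 2 = 2 from rfl, show c1 3 = 4 from rfl, show c1 4 = 5 from rfl,
    show c1 5 = 3 from rfl] at E2
  simp only [Equiv.trans_apply, show c2 0 = 0 from rfl, show c2 1 = 1 from rfl,
    show c2 2 = 2 from rfl, show c2 3 = 5 from rfl, show c2 4 = 3 from rfl,
    show c2 5 = 4 from rfl] at E3
  rw [Set.inter_union_distrib_left, Set.inter_union_distrib_left]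
  unfold cgsOne at he
  simp only [Bool.or_eq_true, Bool.and_eq_true, Bool.not_eq_true'] at he
  rcases he with (⟨⟨h1, h2⟩, h3⟩ | ⟨⟨h1, h2⟩, h3⟩) | ⟨⟨h1, h2⟩, h3⟩
  · rw [E2.2 h2, E3.2 h3]; simpa using E1.1 h1
  · rw [E1.2 h1, E3.2 h3]; simpa using E2.1 h2
  · rw [E1.2 h1, E2.2 h2]; simpa using E3.1 h3

lemma cgs_unsorted {g : Fin 6 → E} (K : cgsGP g) {y t : Fin 6 → ℝ} (hy : cgsKer g y)
    (hyt : cgsKer g (fun i => y i * t i)) (hn : ∀ i, y i ≠ 0) (ht : Function.Injective t) :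
    ∃ e : Fin 6 ≃ Fin 6, ∃ x : E,
      convexHull ℝ {g (e 0), g (e 1), g (e 2)} ∩
        (segment ℝ (g (e 3)) (g (e 4)) ∪ segment ℝ (g (e 4)) (g (e 5)) ∪
          segment ℝ (g (e 5)) (g (e 3))) = {x} := by
  let σ := Tuple.sort t
  obtain ⟨e, he⟩ := cgs_sorted (cgsGP_comp K σ) (cgsKer_comp hy σ) (t := t ∘ σ)
    (cgsKer_comp hyt σ) (fun i => hn _)
    ((Tuple.monotone_sort t).strictMono_of_injective (ht.comp σ.injective))
  exact ⟨e.trans σ, he⟩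

lemma cgsKer_lin {g : Fin 6 → E} {x y : Fin 6 → ℝ} (hx : cgsKer g x) (hy : cgsKer g y) (a b : ℝ) :
    cgsKer g (fun i => a * x i + b * y i) := by
  constructor
  · rw [Finset.sum_add_distrib, ← Finset.mul_sum, ← Finset.mul_sum, hx.1, hy.1]; simp
  · simp only [add_smul, mul_smul]
    rw [Finset.sum_add_distrib, ← Finset.smul_sum, ← Finset.smul_sum, hx.2, hy.2]; simp

lemma cgs_main {g : Fin 6 → E} [FiniteDimensional ℝ E] (hd : Module.finrank ℝ E = 3)
    (K : cgsGP g) :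
    ∃ e : Fin 6 ≃ Fin 6, ∃ x : E,
      convexHull ℝ {g (e 0), g (e 1), g (e 2)} ∩
        (segment ℝ (g (e 3)) (g (e 4)) ∪ segment ℝ (g (e 4)) (g (e 5)) ∪
          segment ℝ (g (e 5)) (g (e 3))) = {x} := by
  let L : (Fin 6 → ℝ) →ₗ[ℝ] (ℝ × E) :=
    (Fintype.linearCombination ℝ (fun _ : Fin 6 => (1 : ℝ))).prod (Fintype.linearCombination ℝ g)
  have hL : ∀ w, w ∈ LinearMap.ker L ↔ cgsKer g w := by
    intro w
    simp [L, cgsKer, LinearMap.mem_ker, Fintype.linearCombination_apply]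
  have hfr : 2 ≤ Module.finrank ℝ (LinearMap.ker L) := by
    have h1 := LinearMap.finrank_range_add_finrank_ker L
    have h2 := Submodule.finrank_le (LinearMap.range L)
    simp [hd] at h1 h2
    omega
  obtain ⟨v, hv⟩ := exists_linearIndependent_of_le_finrank hfr
  set x : Fin 6 → ℝ := (v 0 : Fin 6 → ℝ) with hx
  set y : Fin 6 → ℝ := (v 1 : Fin 6 → ℝ) with hy
  have kx : cgsKer g x := (hL _).1 (v 0).2
  have ky : cgsKer g y := (hL _).1 (v 1).2
  have hli : ∀ a b : ℝ, (∀ i, a * x i + b * y i = 0) → a = 0 ∧ b = 0 := by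
    intro a b hab
    have := LinearIndependent.pair_iff.1 (show LinearIndependent ℝ ![v 0, v 1] by
      convert hv using 1; ext i; fin_cases i <;> rfl) a b (by
        ext i; simpa using hab i)
    exact this
  have hD : ∀ a b, a ≠ b → x a * y b - x b * y a ≠ 0 := by
    intro a b hab h0
    have z1 := K _ (cgsKer_lin kx ky (y a) (-(x a))) a b hab (by ring) (by linarith)
    have q1 := hli _ _ (fun i => congrFun z1 i)
    have z2 := K _ (cgsKer_lin kx ky (y b) (-(x b))) a b hab (by simp; linarith) (by ring)
    have q2 := hli _ _ (fun i => congrFun z2 i)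
    have hxa : x a = 0 := by linarith [q1.2]
    have hxb : x b = 0 := by linarith [q2.2]
    have z3 := K _ (cgsKer_lin kx ky 1 0) a b hab (by simp [hxa]) (by simp [hxb])
    have := hli _ _ (fun i => congrFun z3 i)
    simp at this
  obtain ⟨l, hl⟩ := Infinite.exists_notMem_finset
    (Finset.univ.image (fun a : Fin 6 => -(y a) / x a))
  have hn : ∀ a, l * x a + 1 * y a ≠ 0 := by
    intro a h0
    by_cases hxa : x a = 0
    · obtain ⟨b, hb⟩ := exists_ne a
      apply hD a b hb.symm
      have : y a = 0 := by rw [hxa] at h0; linarith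
      rw [hxa, this]; ring
    · apply hl
      simp only [Finset.mem_image, Finset.mem_univ, true_and]
      exact ⟨a, by rw [div_eq_iff hxa]; linarith⟩
  refine cgs_unsorted K (cgsKer_lin kx ky l 1) (t := fun a => x a / (l * x a + 1 * y a)) ?_ hn ?_
  · have : (fun i => (l * x i + 1 * y i) * (x i / (l * x i + 1 * y i))) = x := by
      ext i; exact mul_div_cancel₀ _ (hn i)
    rw [this]; exact kx
  · intro a b hab
    by_contra hne
    simp only at hab
    rw [div_eq_div_iff (hn a) (hn b)] at hab
    exact hD a b hne (by linarith)

lemma cgs_gp {g : Fin 6 → E}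
    (h : ∀ a b c d : Fin 6, a ≠ b → a ≠ c → a ≠ d → b ≠ c → b ≠ d → c ≠ d →
      AffineIndependent ℝ ![g a, g b, g c, g d]) : cgsGP g := by
  intro w hw a b hab ha hb
  obtain ⟨σ, h0, h1⟩ : ∃ σ : Fin 6 ≃ Fin 6, σ 0 = a ∧ σ 1 = b := by
    refine ⟨(Equiv.swap 1 (Equiv.swap 0 a b)).trans (Equiv.swap 0 a), ?_, ?_⟩
    · have : (0 : Fin 6) ≠ Equiv.swap 0 a b := by
        intro hh
        have := congrArg (Equiv.swap 0 a) hh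
        simp at this
        exact hab this
      rw [Equiv.trans_apply, Equiv.swap_apply_of_ne_of_ne (by decide) this]
      simp
    · simp
  have hne : ∀ i j, i ≠ j → σ i ≠ σ j := fun i j hij => σ.injective.ne hij
  have hk := cgsKer_comp hw σ
  obtain ⟨k1, k2⟩ := hk
  have hi := affineIndependent_iff.1 (h (σ 2) (σ 3) (σ 4) (σ 5) (hne _ _ (by decide))
    (hne _ _ (by decide)) (hne _ _ (by decide)) (hne _ _ (by decide)) (hne _ _ (by decide))
    (hne _ _ (by decide))) Finset.univ ![w (σ 2), w (σ 3), w (σ 4), w (σ 5)]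
    (by simpa [Fin.sum_univ_six, Fin.sum_univ_four, h0, h1, ha, hb] using k1)
    (by simpa [Fin.sum_univ_six, Fin.sum_univ_four, h0, h1, ha, hb] using k2)
  have i0 := hi 0 (by simp)
  have i1 := hi 1 (by simp)
  have i2 := hi 2 (by simp)
  have i3 := hi 3 (by simp)
  simp at i0 i1 i2 i3
  ext i
  obtain ⟨j, rfl⟩ := σ.surjective i
  fin_cases j <;> simp [h0, h1, *]

end

/-- Linear Conway–Gordon–Sachs theorem: Let `f : {1,…,6} → ℝ³` be six
points in 3-space such that no four of them lie in one plane (every four of the points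
are affinely independent). Then there exists a partition of `{1,…,6}` into two
3-element sets `{i,j,k}` and `{p,q,r}` (encoded by a permutation `e` of `Fin 6`) such
that the triangle `convexHull {f i, f j, f k}` intersects the union of segments
`[f p, f q] ∪ [f q, f r] ∪ [f r, f p]` in exactly one point. -/
theorem linear_conway_gordon_sachs (f : Fin 6 → EuclideanSpace ℝ (Fin 3))
    (h : ∀ a b c d : Fin 6, a ≠ b → a ≠ c → a ≠ d → b ≠ c → b ≠ d → c ≠ d →
      AffineIndependent ℝ ![f a, f b, f c, f d]) :
    ∃ e : Fin 6 ≃ Fin 6, ∃ x : EuclideanSpace ℝ (Fin 3),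
      convexHull ℝ {f (e 0), f (e 1), f (e 2)} ∩
        (segment ℝ (f (e 3)) (f (e 4)) ∪ segment ℝ (f (e 4)) (f (e 5)) ∪
          segment ℝ (f (e 5)) (f (e 3))) = {x} := by
  exact cgs_main (by simp) (cgs_gp h)
end
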